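/- Let w ∈ V with ⟨b,w⟩ < 0 and set p_w := (M(w)/⟨−b,w⟩)·(−b). Let q be the unique point of the frontier of P on the ray {λ·(−b) : λ > 0}. Then ‖q‖/‖q − b‖ ≤ ‖p_w‖/‖p_w − b‖. -/

import Mathlib

open RealInnerProductSpace

/-!
At `t • (-b)` the ratio equals `t / (t + 1)`, which increases with `t ≥ 0`. The closed half-space
`{x | f x ≤ m}` contains `P`, hence its closure, so on the ray through `-b` the point `q` comes no
later than `p`, where the ray crosses the hyperplane `{x | f x = m}`.
-/

theorem monotoneOn_norm_smul_div_norm_smul_add_self {E : Type*} [SeminormedAddCommGroup E]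
    [NormedSpace ℝ E] (v : E) :
    MonotoneOn (fun t : ℝ => ‖t • v‖ / ‖t • v + v‖) (Set.Ici 0) := by
  -- The factor `‖v‖ / ‖v‖` is `0` when `‖v‖ = 0`.
  have ratio_eq {t : ℝ} (ht : 0 ≤ t) :
      ‖t • v‖ / ‖t • v + v‖ = t / (t + 1) * (‖v‖ / ‖v‖) := by
    have add_self : t • v + v = (t + 1) • v := by rw [add_smul, one_smul]
    rw [add_self, norm_smul_of_nonneg ht, norm_smul_of_nonneg (by positivity),
      mul_div_mul_comm]
  intro s (hs : 0 ≤ s) t (ht : 0 ≤ t) hst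
  have div_add_one_le : s / (s + 1) ≤ t / (t + 1) := by
    rw [div_le_div_iff₀ (by positivity) (by positivity)]
    linarith
  simp only [ratio_eq hs, ratio_eq ht]
  gcongr

theorem le_div_of_smul_mem_closure {𝕜 E : Type*} [Field 𝕜] [LinearOrder 𝕜]
    [IsStrictOrderedRing 𝕜] [TopologicalSpace 𝕜] [OrderClosedTopology 𝕜]
    [AddCommMonoid E] [TopologicalSpace E] [Module 𝕜 E]
    {f : E →L[𝕜] 𝕜} {P : Set E} {m t : 𝕜} {v : E} (hm : ∀ x ∈ P, f x ≤ m) (hv : 0 < f v)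
    (htv : t • v ∈ closure P) : t ≤ m / f v := by
  have apply_le : f (t • v) ≤ m :=
    le_on_closure hm f.continuous.continuousOn continuousOn_const htv
  rwa [map_smul, smul_eq_mul, ← le_div_iff₀ hv] at apply_le

theorem ratio_at_q_le_ratio_at_pw_general {V : Type*} [SeminormedAddCommGroup V]
    [NormedSpace ℝ V] {P : Set V} {b q p : V} {f : V →L[ℝ] ℝ} {m : ℝ}
    (hm : ∀ x ∈ P, f x ≤ m) (hq : q ∈ closure P) (hqray : ∃ μ : ℝ, 0 ≤ μ ∧ q = μ • (-b))
    (hfb : f b < 0) (hp : p = (m / f (-b)) • (-b)) :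
    ‖q‖ / ‖q - b‖ ≤ ‖p‖ / ‖p - b‖ := by
  obtain ⟨μ, hμ, rfl⟩ := hqray
  have hf_neg : 0 < f (-b) := by rwa [map_neg, neg_pos]
  have hμ_le : μ ≤ m / f (-b) := le_div_of_smul_mem_closure hm hf_neg hq
  subst hp
  simpa only [sub_eq_add_neg] using
    monotoneOn_norm_smul_div_norm_smul_add_self (-b) hμ (hμ.trans hμ_le) hμ_le

/-- Let `P` be a convex polytope in a finite-dimensional real inner product space whose
interior contains the origin, `b ∈ interior P` with `b ≠ 0`, and `M w = max_{x ∈ P} ⟪x, w⟫`.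
Let `q` be the unique point of the frontier of `P` on the ray `{λ • (-b) : λ > 0}`.
If `⟪b, w⟫ < 0` and `p_w = (M w / ⟪-b, w⟫) • (-b)`, then
`‖q‖ / ‖q - b‖ ≤ ‖p_w‖ / ‖p_w - b‖`. -/
theorem ratio_at_q_le_ratio_at_pw
    {V : Type*} [NormedAddCommGroup V] [InnerProductSpace ℝ V] [FiniteDimensional ℝ V]
    (S : Finset V) (P : Set V) (hP : P = convexHull ℝ (S : Set V))
    (h0 : (0 : V) ∈ interior P)
    (b : V) (hb : b ∈ interior P) (hb0 : b ≠ 0)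
    (M : V → ℝ) (hM : ∀ w : V, IsGreatest ((fun x => ⟪x, w⟫) '' P) (M w))
    (q : V) (hq : q ∈ frontier P) (hqray : ∃ μ : ℝ, 0 < μ ∧ q = μ • (-b))
    (w : V) (hbw : ⟪b, w⟫ < 0)
    (p : V) (hp : p = (M w / ⟪-b, w⟫) • (-b)) :
    ‖q‖ / ‖q - b‖ ≤ ‖p‖ / ‖p - b‖ := by
  obtain ⟨μ, hμ, hqμ⟩ := hqray
  exact ratio_at_q_le_ratio_at_pw_general (f := innerSLFlip ℝ w)
    (fun _ hx => (hM w).2 ⟨_, hx, rfl⟩) (frontier_subset_closure hq) ⟨μ, hμ.le, hqμ⟩ hbw hp
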